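/- arXiv:1906.07069 — 5 statements merged into one kernel-verified Lean document; each statement's English description precedes it below -/
import Mathlib

section
/- Let R₁, …, R_ℓ ⊆ ℕ × ℕ be strictly monotone relations. Then the relational composition R₁R₂⋯R_ℓ equals the intersection of the composition of the weak forward relations ↓→R₁ ↓→R₂ ⋯ ↓→R_ℓ with the composition of the weak backward relations ↓←R₁ ↓←R₂ ⋯ ↓←R_ℓ. That is, a pair (m,n) lies in R₁⋯R_ℓ if and only if it lies in both ↓→R₁⋯↓→R_ℓ and ↓←R₁⋯↓←R_ℓ. -/
/-- The weak forward relation: `(m,n)` is related if some `n' ≥ n` has `(m,n') ∈ R`. -/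
def WeakFwd (R : ℕ → ℕ → Prop) (m n : ℕ) : Prop := ∃ n' ≥ n, R m n'

/-- The weak backward relation: `(m,n)` is related if some `m' ≥ m` has `(m',n) ∈ R`. -/
def WeakBwd (R : ℕ → ℕ → Prop) (m n : ℕ) : Prop := ∃ m' ≥ m, R m' n

/-- `R` is strictly monotone: for `(m,n), (m',n') ∈ R`, `m < m'` iff `n < n'`. -/
def StrictlyMonotoneRel (R : ℕ → ℕ → Prop) : Prop :=
  ∀ m n m' n', R m n → R m' n' → (m < m' ↔ n < n')

/-- Composition of a finite sequence of relations. -/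
def CompList : List (ℕ → ℕ → Prop) → ℕ → ℕ → Prop
  | [] => fun m n => m = n
  | R :: Rs => fun m n => ∃ k, R m k ∧ CompList Rs k n

theorem weak_aux (Rs : List (ℕ → ℕ → Prop)) :
    (∀ R ∈ Rs, StrictlyMonotoneRel R) → ∀ a b n : ℕ, a ≤ b →
      CompList (Rs.map WeakFwd) a n → CompList (Rs.map WeakBwd) b n →
      a = b ∧ CompList Rs a n := by
  induction Rs with
  | nil =>
    intro _ a b n _ h1 h2
    simp only [List.map_nil, CompList] at h1 h2 ⊢
    omega
  | cons R Rs ih =>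
    intro hm a b n hab h1 h2
    simp only [List.map_cons, CompList] at h1 h2 ⊢
    obtain ⟨x, ⟨y, hxy, hay⟩, hx⟩ := h1
    obtain ⟨z, ⟨w, hwb, hwz⟩, hz⟩ := h2
    have hR := hm R (by simp)
    have e1 := hR _ _ _ _ hay hwz
    have e2 := hR _ _ _ _ hwz hay
    obtain ⟨hxz, hc⟩ := ih (fun S hS => hm S (by simp [hS])) x z n (by omega) hx hz
    have hyx : y = x := by omega
    subst hyx
    exact ⟨by omega, y, hay, hc⟩

theorem weak_fwd_bwd (Rs : List (ℕ → ℕ → Prop)) : ∀ m n : ℕ, CompList Rs m n →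
      CompList (Rs.map WeakFwd) m n ∧ CompList (Rs.map WeakBwd) m n := by
  induction Rs with
  | nil => intro m n h; exact ⟨h, h⟩
  | cons R Rs ih =>
    rintro m n ⟨k, hk, h⟩
    obtain ⟨h1, h2⟩ := ih k n h
    exact ⟨⟨k, ⟨k, le_refl k, hk⟩, h1⟩, ⟨k, ⟨m, le_refl m, hk⟩, h2⟩⟩

theorem comp_eq_weakFwd_inter_weakBwd (Rs : List (ℕ → ℕ → Prop))
    (hmono : ∀ R ∈ Rs, StrictlyMonotoneRel R) (m n : ℕ) :
    CompList Rs m n ↔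
      CompList (Rs.map WeakFwd) m n ∧ CompList (Rs.map WeakBwd) m n := by
  exact ⟨weak_fwd_bwd Rs m n, fun h => (weak_aux Rs hmono m m n le_rfl h.1 h.2).2⟩
end

section
/- Let R₁, …, R_ℓ ⊆ ℕ × ℕ be strictly monotone relations and suppose (m,n) ∈ ↓→R₁ ⋯ ↓→R_ℓ and (m',n') ∈ ↓←R₁ ⋯ ↓←R_ℓ (compositions of weak forward, respectively weak backward, relations). If n' ≤ n, then m' ≤ m. -/
theorem weakFwd_weakBwd_le (Rs : List (ℕ → ℕ → Prop))
    (hmono : ∀ R ∈ Rs, StrictlyMonotoneRel R) (m n m' n' : ℕ)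
    (hfwd : CompList (Rs.map WeakFwd) m n)
    (hbwd : CompList (Rs.map WeakBwd) m' n')
    (hle : n' ≤ n) : m' ≤ m := by
  induction Rs generalizing m m' with
  | nil =>
    simp only [List.map_nil, CompList] at hfwd hbwd
    omega
  | cons R Rs ih =>
    obtain ⟨k, ⟨k1, hk1, hR1⟩, hf⟩ := hfwd
    obtain ⟨k', ⟨m2, hm2, hR2⟩, hb⟩ := hbwd
    have h1 : k' ≤ k := ih (fun S hS => hmono S (List.mem_cons_of_mem _ hS)) k k' hf hb
    have h2 := hmono R List.mem_cons_self m k1 m2 k' hR1 hR2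
    omega
end

section
/- Let R₁, …, R_ℓ ⊆ ℕ × ℕ be strictly monotone relations and suppose (m,n) ∈ ↓→R₁ ⋯ ↓→R_ℓ and (m',n') ∈ ↓←R₁ ⋯ ↓←R_ℓ (compositions of weak forward, respectively weak backward, relations). If n' < n, then m' < m. -/
theorem weakFwd_weakBwd_lt (Rs : List (ℕ → ℕ → Prop))
    (hmono : ∀ R ∈ Rs, StrictlyMonotoneRel R) (m n m' n' : ℕ)
    (hfwd : CompList (Rs.map WeakFwd) m n)
    (hbwd : CompList (Rs.map WeakBwd) m' n')
    (hlt : n' < n) : m' < m := by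
  induction Rs generalizing m m' with
  | nil =>
    simp only [List.map_nil, CompList] at hfwd hbwd
    omega
  | cons R Rs ih =>
    obtain ⟨k, ⟨p, hp, hR⟩, hk⟩ := hfwd
    obtain ⟨k', ⟨q, hq, hR'⟩, hk'⟩ := hbwd
    have h := ih (fun S hS => hmono S (List.mem_cons_of_mem _ hS)) k k' hk hk'
    have h2 := (hmono R List.mem_cons_self q k' m p hR' hR).2 (by omega)
    omega
end

section
/- Let R₁, …, R_ℓ ⊆ ℕ × ℕ be strictly monotone relations. If (m,n) ∈ ↓→R₁⋯↓→R_ℓ and (m,n) ∈ ↓←R₁⋯↓←R_ℓ, witnessed by natural numbers p₀, …, p_ℓ with p₀ = m, p_ℓ = n and (p_{i-1}, p_i) ∈ ↓→R_i for all 0 < i ≤ ℓ, and by q₀, …, q_ℓ with q₀ = m, q_ℓ = n and (q_{i-1}, q_i) ∈ ↓←R_i for all 0 < i ≤ ℓ, then in fact (p_{i-1}, p_i) ∈ R_i for every 0 < i ≤ ℓ; in particular (m,n) ∈ R₁⋯R_ℓ. -/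
theorem compList_ofFn_aux : ∀ (ℓ : ℕ) (R : Fin ℓ → ℕ → ℕ → Prop) (p : Fin (ℓ + 1) → ℕ),
    (∀ i : Fin ℓ, R i (p i.castSucc) (p i.succ)) →
    CompList (List.ofFn R) (p 0) (p (Fin.last ℓ)) := by
  intro ℓ
  induction ℓ with
  | zero => intro R p _; simp [CompList]
  | succ k ih =>
    intro R p h
    rw [List.ofFn_succ]
    refine ⟨p 1, h 0, ?_⟩
    exact ih (fun i => R i.succ) (fun i => p i.succ) (fun i => h i.succ)

theorem weak_witnesses_are_exact (ℓ : ℕ) (R : Fin ℓ → ℕ → ℕ → Prop)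
    (hmono : ∀ i, StrictlyMonotoneRel (R i))
    (m n : ℕ) (p q : Fin (ℓ + 1) → ℕ)
    (hp0 : p 0 = m) (hpl : p (Fin.last ℓ) = n)
    (hp : ∀ i : Fin ℓ, WeakFwd (R i) (p i.castSucc) (p i.succ))
    (hq0 : q 0 = m) (hql : q (Fin.last ℓ) = n)
    (hq : ∀ i : Fin ℓ, WeakBwd (R i) (q i.castSucc) (q i.succ)) :
    (∀ i : Fin ℓ, R i (p i.castSucc) (p i.succ)) ∧
      CompList (List.ofFn R) m n := by
  have hle : ∀ i : Fin (ℓ + 1), p i ≤ q i := by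
    intro i
    induction i using Fin.induction with
    | zero => omega
    | succ i ih =>
      obtain ⟨a, ha, h1⟩ := hp i
      obtain ⟨b, hb, h2⟩ := hq i
      have := hmono i _ _ _ _ h2 h1
      omega
  have heq : ∀ i : Fin (ℓ + 1), p i = q i := by
    intro i
    induction i using Fin.reverseInduction with
    | last => omega
    | cast i ih =>
      obtain ⟨a, ha, h1⟩ := hp i
      obtain ⟨b, hb, h2⟩ := hq i
      have h3 := hmono i _ _ _ _ h1 h2
      have h4 := hle i.castSucc
      omega
  have hR : ∀ i : Fin ℓ, R i (p i.castSucc) (p i.succ) := by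
    intro i
    obtain ⟨a, ha, h1⟩ := hp i
    obtain ⟨b, hb, h2⟩ := hq i
    have h3 := hmono i _ _ _ _ h2 h1
    have h4 := heq i.castSucc
    have h5 := heq i.succ
    have h6 : a = p i.succ := by omega
    rwa [h6] at h1
  refine ⟨hR, ?_⟩
  rw [← hp0, ← hpl]
  exact compList_ofFn_aux ℓ R p hR
end

section
/- Let Δ := {m₂, m₃, d₂, d₃, t₂, t₃} and for each letter x ∈ Δ let R_x ⊆ ℕ × ℕ be the corresponding relation: R_{m_f} := {(n, f·n) | n ∈ ℕ}, R_{d_f} := {(f·n, n) | n ∈ ℕ}, and R_{t_f} := {(n,n) | n ≢ 0 (mod f)} for f ∈ {2,3}. Then for every word x₁⋯x_ℓ over Δ, the pair (1,1) belongs to the composition R_{x₁}R_{x₂}⋯R_{x_ℓ} if and only if (1,1) belongs to both ↓→R_{x₁}⋯↓→R_{x_ℓ} and ↓←R_{x₁}⋯↓←R_{x_ℓ}. -/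
/-- The alphabet Δ = {m₂, m₃, d₂, d₃, t₂, t₃}. -/
inductive Delta : Type
  | m2 | m3 | d2 | d3 | t2 | t3

/-- The relation associated with each letter of Δ. -/
def RelOf : Delta → ℕ → ℕ → Prop
  | .m2 => fun m n => n = 2 * m
  | .m3 => fun m n => n = 3 * m
  | .d2 => fun m n => m = 2 * n
  | .d3 => fun m n => m = 3 * n
  | .t2 => fun m n => m = n ∧ n % 2 ≠ 0
  | .t3 => fun m n => m = n ∧ n % 3 ≠ 0

theorem RelOf_mono (x : Delta) : StrictlyMonotoneRel (RelOf x) := by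
  intro m n m' n' h h'
  cases x <;> simp only [RelOf] at h h' <;> omega

theorem comp_weak_aux (w : List Delta) : ∀ a b c : ℕ, a ≤ b →
    CompList (w.map fun x => WeakFwd (RelOf x)) a c →
    CompList (w.map fun x => WeakBwd (RelOf x)) b c →
    a = b ∧ CompList (w.map RelOf) a c := by
  induction w with
  | nil =>
    intro a b c _ h1 h2
    simp only [List.map_nil, CompList] at *
    omega
  | cons x w ih =>
    rintro a b c hab ⟨k, ⟨a', hk, ha⟩, h1⟩ ⟨j, ⟨b', hb', hb⟩, h2⟩
    have e1 := RelOf_mono x _ _ _ _ hb ha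
    have e2 := RelOf_mono x _ _ _ _ ha hb
    obtain ⟨hkj, hc⟩ := ih k j c (by omega) h1 h2
    have hak : a' = k := by omega
    subst hak
    exact ⟨by omega, a', ha, hc⟩

theorem comp_to_weak (w : List Delta) : ∀ a c : ℕ, CompList (w.map RelOf) a c →
    CompList (w.map fun x => WeakFwd (RelOf x)) a c ∧
    CompList (w.map fun x => WeakBwd (RelOf x)) a c := by
  induction w with
  | nil => intro a c h; exact ⟨h, h⟩
  | cons x w ih =>
    rintro a c ⟨k, hk, h⟩
    obtain ⟨h1, h2⟩ := ih k c h
    exact ⟨⟨k, ⟨k, le_refl _, hk⟩, h1⟩, ⟨k, ⟨a, le_refl _, hk⟩, h2⟩⟩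

theorem one_one_comp_iff_weak (w : List Delta) :
    CompList (w.map RelOf) 1 1 ↔
      CompList (w.map fun x => WeakFwd (RelOf x)) 1 1 ∧
        CompList (w.map fun x => WeakBwd (RelOf x)) 1 1 := by
  exact ⟨comp_to_weak w 1 1, fun h => (comp_weak_aux w 1 1 1 le_rfl h.1 h.2).2⟩
end
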